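/- Necessary condition via auxiliary element: let N = 2^K, g ∈ ℚ[χ]/⟨1+χ+⋯+χ^{N-1}⟩ with pr_l(g) ∈ 4·ℤ[χ]/⟨1+χ^{2^l}⟩ for all l. If there exist h in the image of ℤ[χ] and an index 0 ≤ l' ≤ K-1 with w_l(g)+w_l(h) ≥ 2+K-l-2^{-l} for all l ≠ l' (0 ≤ l ≤ K-1) but w_{l'}(g)+w_{l'}(h) < 2+K-l'-2^{-l'}, then g does not lie in 4·ℤ[χ]/⟨1+χ+⋯+χ^{N-1}⟩. -/

import Mathlib

noncomputable section
open Polynomial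

/-- The quotient ring ℚ[χ]/⟨1+χ+⋯+χ^{2^K-1}⟩. -/
abbrev QB (K : ℕ) :=
  Polynomial ℚ ⧸ Ideal.span {(∑ i ∈ Finset.range (2 ^ K), X ^ i : Polynomial ℚ)}

def mkB (K : ℕ) : Polynomial ℚ →+* QB K := Ideal.Quotient.mk _

/-- The quotient ring ℚ[χ]/⟨1+χ^{2^l}⟩. -/
abbrev QS (l : ℕ) := Polynomial ℚ ⧸ Ideal.span {(1 + X ^ (2 ^ l) : Polynomial ℚ)}

def mkS (l : ℕ) : Polynomial ℚ →+* QS l := Ideal.Quotient.mk _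

/-- `IsNF K l g w` : g admits a w_l-normal form pr_l(g) = (2^a/u)·((1-χ)^b·v₁ + 2·v₂)
with u, v₁(1) odd, 0 ≤ b < 2^l, and w = a + b/2^l. -/
def IsNF (K l : ℕ) (g : QB K) (w : ℚ) : Prop :=
  ∃ (p : Polynomial ℚ) (a u : ℤ) (b : ℕ) (v₁ v₂ : Polynomial ℤ),
    mkB K p = g ∧ Odd u ∧ b < 2 ^ l ∧ Odd (v₁.eval 1) ∧
    mkS l p = mkS l (C ((2 : ℚ) ^ a / (u : ℚ)) *
      ((1 - X) ^ b * v₁.map (Int.castRingHom ℚ) + 2 * v₂.map (Int.castRingHom ℚ))) ∧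
    w = a + (b : ℚ) / 2 ^ l

open Classical in
/-- The valuation w_l : w_l(g) = a + b/2^l from the normal form, and ∞ if
1+χ^{2^l} divides g (i.e. no normal form exists). -/
def wl (K l : ℕ) (g : QB K) : WithTop ℚ :=
  if h : ∃ w : ℚ, IsNF K l g w then (h.choose : WithTop ℚ) else ⊤

/-!
For integral `Z`, `2 ^ l * w_l(Z)` is the order of `Z` at the prime `ϖ = 1 - ζ` of `ℤ[ζ]`, where
`ζ` has order `2 ^ (l + 1)`. Since `ϖ ^ 2 ^ l` is twice an element prime to `ϖ`, the bound
`w_l(g) + w_l(h) ≥ 2 + K - l - 2 ^ (-l)` for `g = 4 z` says exactly that `2 ^ (K - l)` divides the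
image of `F = (1 - χ) z h` in `ℤ[χ]/⟨1 + χ ^ 2 ^ l⟩`.

In that ring `(χ ^ 2 ^ K - 1) / (1 + χ ^ 2 ^ l)` equals `-2 ^ (K - l)`. So if all the bounds with
`l ≠ l'` hold, a combination `H` of these cofactors agrees with `F` modulo every factor of
`χ ^ 2 ^ K - 1` other than `1 + χ ^ 2 ^ l'`, while `H ≡ 0` modulo `1 + χ ^ 2 ^ l'`. Hence `F - H`
is a multiple of the cofactor of `1 + χ ^ 2 ^ l'`, and the bound at `l'` follows as well.
-/

/-- The ring ℤ[χ]/⟨1+χ^{2^l}⟩, given as the cyclotomic ring ℤ[ζ] with ζ of order 2^{l+1}. -/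
abbrev QZ (l : ℕ) := AdjoinRoot (cyclotomic (2 ^ (l + 1)) ℤ)

/-- The projection ℤ[χ] → ℤ[χ]/⟨1+χ^{2^l}⟩, the integral counterpart of `mkS`. -/
def mkZ (l : ℕ) : ℤ[X] →+* QZ l := AdjoinRoot.mk _

/-- The order of an integral polynomial at the prime 1-ζ of ℤ[χ]/⟨1+χ^{2^l}⟩;
it is `2 ^ l * w_l`. -/
def oneSubOrder (l : ℕ) (Z : ℤ[X]) : ℕ∞ := emultiplicity (mkZ l (1 - X)) (mkZ l Z)

section Interpolation

variable {R ι : Type*} [CommRing R] [DecompositionMonoid R] [DecidableEq ι]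

theorem exists_dvd_sub_prod_erase_mul {s : Finset ι} {f : ι → R}
    (hf : (s : Set ι).Pairwise (Function.onFun IsRelPrime f)) {F : R} {i₀ : ι} (hi₀ : i₀ ∈ s)
    (h : ∀ i ∈ s, i ≠ i₀ → ∃ G, f i ∣ F - (∏ j ∈ s.erase i, f j) * G) :
    ∃ G, f i₀ ∣ F - (∏ j ∈ s.erase i₀, f j) * G := by
  choose! G hG using h
  have dvd_cofactor {i j : ι} (hj : j ∈ s) (hji : j ≠ i) : f j ∣ (∏ k ∈ s.erase i, f k) * G i :=
    (Finset.dvd_prod_of_mem f (Finset.mem_erase.2 ⟨hji, hj⟩)).mul_right _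
  set H := ∑ i ∈ s.erase i₀, (∏ j ∈ s.erase i, f j) * G i with hH
  have dvd_sub_H : ∀ j ∈ s.erase i₀, f j ∣ F - H := by
    intro j hj
    obtain ⟨hj₀, hjs⟩ := Finset.mem_erase.1 hj
    rw [hH, ← Finset.add_sum_erase _ _ hj, ← sub_sub]
    refine dvd_sub (hG j hjs hj₀) (Finset.dvd_sum fun i hi => ?_)
    exact dvd_cofactor hjs (Finset.ne_of_mem_erase hi).symm
  obtain ⟨G₀, hG₀⟩ : ∏ j ∈ s.erase i₀, f j ∣ F - H :=
    Finset.prod_dvd_of_isRelPrime (hf.mono (Finset.coe_subset.2 (Finset.erase_subset _ _)))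
      dvd_sub_H
  refine ⟨G₀, ?_⟩
  rw [← hG₀, sub_sub_cancel]
  exact Finset.dvd_sum fun i hi => dvd_cofactor hi₀ (Finset.ne_of_mem_erase hi).symm

end Interpolation

theorem isRelPrime_cyclotomic {m n : ℕ} (hm : 0 < m) (hn : 0 < n) (hmn : m ≠ n) :
    IsRelPrime (cyclotomic m ℤ) (cyclotomic n ℤ) := by
  refine (cyclotomic.irreducible hm).isRelPrime_iff_not_dvd.2 fun hdvd => hmn ?_
  have hassoc := (cyclotomic.irreducible hm).associated_of_dvd (cyclotomic.irreducible hn) hdvd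
  exact cyclotomic_injective
    (eq_of_monic_of_associated (cyclotomic.monic m ℤ) (cyclotomic.monic n ℤ) hassoc)

theorem cyclotomic_two_pow_succ (R : Type*) [CommRing R] (l : ℕ) :
    cyclotomic (2 ^ (l + 1)) R = 1 + X ^ 2 ^ l := by
  simp [cyclotomic_prime_pow_eq_geom_sum Nat.prime_two, Finset.sum_range_succ]

theorem prod_cyclotomic_two_pow (R : Type*) [CommRing R] (K : ℕ) :
    ∏ i ∈ Finset.range (K + 1), cyclotomic (2 ^ i) R = X ^ 2 ^ K - 1 := by
  rw [← prod_cyclotomic_eq_X_pow_sub_one (by positivity), Nat.prod_divisors_prime_pow Nat.prime_two]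

section CyclotomicRing

variable {l : ℕ}

instance : IsDomain (QZ l) :=
  AdjoinRoot.isDomain_of_prime (cyclotomic.irreducible (by positivity)).prime

theorem mkZ_surjective (l : ℕ) : Function.Surjective (mkZ l) :=
  AdjoinRoot.mk_surjective

theorem mkZ_eq_mkZ_iff {Z W : ℤ[X]} : mkZ l Z = mkZ l W ↔ 1 + X ^ 2 ^ l ∣ Z - W := by
  rw [← cyclotomic_two_pow_succ]
  exact AdjoinRoot.mk_eq_mk

theorem mkZ_X_pow_two_pow (l : ℕ) : mkZ l X ^ 2 ^ l = -1 := by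
  rw [← map_pow, ← map_one (mkZ l), ← map_neg, mkZ_eq_mkZ_iff]
  exact ⟨1, by ring⟩

theorem QZ.two_ne_zero (l : ℕ) : (2 : QZ l) ≠ 0 := by
  have hdeg : (2 : ℤ[X]).natDegree < (cyclotomic (2 ^ (l + 1)) ℤ).natDegree := by
    rw [natDegree_ofNat, natDegree_cyclotomic]
    exact Nat.totient_pos.2 (by positivity)
  have h := AdjoinRoot.mk_ne_zero_of_natDegree_lt (cyclotomic.monic _ ℤ) _root_.two_ne_zero hdeg
  rwa [map_ofNat] at h

theorem mkZ_one_sub_X_dvd_iff {Z : ℤ[X]} : mkZ l (1 - X) ∣ mkZ l Z ↔ Even (Z.eval 1) := by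
  constructor
  · rintro ⟨q, hq⟩
    obtain ⟨Q, rfl⟩ := mkZ_surjective l q
    obtain ⟨r, hr⟩ := mkZ_eq_mkZ_iff.1 (hq.trans (map_mul (mkZ l) (1 - X) Q).symm)
    have h1 : Z.eval 1 = 2 * r.eval 1 := by
      simpa [one_add_one_eq_two] using congrArg (eval 1) hr
    exact even_iff_two_dvd.2 ⟨_, h1⟩
  · intro hZ
    have dvd_two : mkZ l (1 - X) ∣ 2 := by
      have h := one_sub_dvd_one_sub_pow (mkZ l X) (2 ^ l)
      rw [mkZ_X_pow_two_pow, sub_neg_eq_add, one_add_one_eq_two] at h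
      rwa [map_sub, map_one]
    obtain ⟨k, hk⟩ := even_iff_two_dvd.1 hZ
    obtain ⟨Q, hQ⟩ := X_sub_C_dvd_sub_C_eval (a := (1 : ℤ)) (p := Z)
    have hZ' : Z = (1 - X) * -Q + 2 * C k := by
      rw [hk, C_1, C_mul, C_ofNat] at hQ
      linear_combination hQ
    rw [hZ', map_add, map_mul, map_mul, map_ofNat]
    exact dvd_add (dvd_mul_right _ _) (dvd_two.mul_right _)

theorem exists_mkZ_one_sub_X_pow_eq_two_mul (l : ℕ) :
    ∃ t, mkZ l (1 - X) ^ 2 ^ l = 2 * t ∧ ¬ mkZ l (1 - X) ∣ t := by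
  obtain ⟨r, hr⟩ := exists_add_pow_prime_pow_eq Nat.prime_two (1 - X : ℤ[X]) X l
  refine ⟨mkZ l (1 - (1 - X) * X * r), ?_, by rw [mkZ_one_sub_X_dvd_iff]; simp⟩
  have h := congrArg (mkZ l) hr
  simp only [sub_add_cancel, one_pow, map_one, map_add, map_pow, mkZ_X_pow_two_pow, map_mul,
    Nat.cast_ofNat, map_ofNat] at h
  simp only [map_sub, map_mul, map_one] at h ⊢
  linear_combination -h

theorem prime_mkZ_one_sub_X (l : ℕ) : Prime (mkZ l (1 - X)) := by
  refine ⟨fun h0 => ?_, fun hunit => ?_, fun x y hxy => ?_⟩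
  · obtain ⟨t, ht, hndvd⟩ := exists_mkZ_one_sub_X_pow_eq_two_mul l
    rw [h0, zero_pow (by positivity), zero_eq_mul, or_iff_right (QZ.two_ne_zero l)] at ht
    exact hndvd (ht ▸ dvd_zero _)
  · have h := isUnit_iff_dvd_one.1 hunit
    rw [← map_one (mkZ l), mkZ_one_sub_X_dvd_iff] at h
    simp at h
  · obtain ⟨Z, rfl⟩ := mkZ_surjective l x
    obtain ⟨W, rfl⟩ := mkZ_surjective l y
    rw [← map_mul] at hxy
    simpa only [mkZ_one_sub_X_dvd_iff, eval_mul, Int.even_mul] using hxy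

theorem oneSubOrder_mul (Z W : ℤ[X]) :
    oneSubOrder l (Z * W) = oneSubOrder l Z + oneSubOrder l W := by
  simp only [oneSubOrder, map_mul, emultiplicity_mul (prime_mkZ_one_sub_X l)]

theorem oneSubOrder_add_of_lt {Z W : ℤ[X]} (h : oneSubOrder l Z < oneSubOrder l W) :
    oneSubOrder l (Z + W) = oneSubOrder l Z := by
  rw [add_comm, oneSubOrder, map_add]
  exact emultiplicity_add_of_gt h

theorem oneSubOrder_one_sub_X_pow (n : ℕ) : oneSubOrder l ((1 - X) ^ n) = n := by
  rw [oneSubOrder, map_pow, emultiplicity_pow_self_of_prime (prime_mkZ_one_sub_X l)]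

theorem oneSubOrder_eq_zero_iff {Z : ℤ[X]} : oneSubOrder l Z = 0 ↔ Odd (Z.eval 1) := by
  rw [oneSubOrder, emultiplicity_eq_zero, mkZ_one_sub_X_dvd_iff, Int.not_even_iff_odd]

theorem emultiplicity_two_pow (l n : ℕ) :
    emultiplicity (mkZ l (1 - X)) (2 ^ n) = (2 ^ l * n : ℕ) := by
  obtain ⟨t, ht, hndvd⟩ := exists_mkZ_one_sub_X_pow_eq_two_mul l
  have h := congrArg (emultiplicity (mkZ l (1 - X))) ht
  rw [emultiplicity_pow_self_of_prime (prime_mkZ_one_sub_X l),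
    emultiplicity_mul (prime_mkZ_one_sub_X l), emultiplicity_eq_zero.2 hndvd, add_zero] at h
  rw [emultiplicity_pow (prime_mkZ_one_sub_X l), ← h, mul_comm, Nat.cast_mul]

theorem oneSubOrder_two_pow (l n : ℕ) : oneSubOrder l (2 ^ n) = (2 ^ l * n : ℕ) := by
  rw [oneSubOrder, map_pow, map_ofNat, emultiplicity_two_pow]

theorem oneSubOrder_normalForm {b : ℕ} (hb : b < 2 ^ l) {v₁ : ℤ[X]} (hv₁ : Odd (v₁.eval 1))
    (v₂ : ℤ[X]) : oneSubOrder l ((1 - X) ^ b * v₁ + 2 * v₂) = b := by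
  have hleft : oneSubOrder l ((1 - X) ^ b * v₁) = b := by
    rw [oneSubOrder_mul, oneSubOrder_one_sub_X_pow, oneSubOrder_eq_zero_iff.2 hv₁, add_zero]
  have hright : (b : ℕ∞) < oneSubOrder l (2 * v₂) := by
    have h2 := oneSubOrder_two_pow l 1
    rw [pow_one, mul_one] at h2
    rw [oneSubOrder_mul, h2]
    exact (Nat.cast_lt.2 hb).trans_le le_self_add
  rw [← hleft] at hright
  rw [oneSubOrder_add_of_lt hright, hleft]

theorem two_pow_dvd_mkZ_iff {n : ℕ} {Z : ℤ[X]} :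
    2 ^ n ∣ mkZ l Z ↔ ((2 ^ l * n : ℕ) : ℕ∞) ≤ oneSubOrder l Z := by
  constructor
  · intro h
    rw [← emultiplicity_two_pow]
    exact emultiplicity_le_emultiplicity_of_dvd_right h
  · intro h
    obtain ⟨t, ht, -⟩ := exists_mkZ_one_sub_X_pow_eq_two_mul l
    have hpow : mkZ l (1 - X) ^ (2 ^ l * n) = 2 ^ n * t ^ n := by rw [pow_mul, ht, mul_pow]
    exact (Dvd.intro _ hpow.symm).trans (pow_dvd_of_le_emultiplicity h)

theorem exists_mkZ_eq_of_oneSubOrder_eq {Z : ℤ[X]} {c : ℕ} (h : oneSubOrder l Z = c) :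
    ∃ v : ℤ[X], Odd (v.eval 1) ∧
      mkZ l Z = mkZ l (2 ^ (c / 2 ^ l) * ((1 - X) ^ (c % 2 ^ l) * v)) := by
  obtain ⟨t, ht, htdvd⟩ := exists_mkZ_one_sub_X_pow_eq_two_mul l
  obtain ⟨T, rfl⟩ := mkZ_surjective l t
  obtain ⟨⟨q, hq⟩, hndvd⟩ := emultiplicity_eq_coe.1 h
  obtain ⟨Q, rfl⟩ := mkZ_surjective l q
  have hT : Odd (T.eval 1) := by
    rwa [← Int.not_even_iff_odd, ← mkZ_one_sub_X_dvd_iff (l := l)]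
  have hQ : Odd (Q.eval 1) := by
    rw [← Int.not_even_iff_odd, ← mkZ_one_sub_X_dvd_iff (l := l)]
    intro hdvd
    exact hndvd (hq ▸ pow_succ (mkZ l (1 - X)) c ▸ mul_dvd_mul_left _ hdvd)
  refine ⟨T ^ (c / 2 ^ l) * Q, by simpa using hT.pow.mul hQ, ?_⟩
  calc mkZ l Z = (mkZ l (1 - X) ^ 2 ^ l) ^ (c / 2 ^ l) * mkZ l (1 - X) ^ (c % 2 ^ l) * mkZ l Q := by
        rw [hq, ← pow_mul, ← pow_add, Nat.div_add_mod]
    _ = mkZ l (2 ^ (c / 2 ^ l) * ((1 - X) ^ (c % 2 ^ l) * (T ^ (c / 2 ^ l) * Q))) := by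
        rw [ht]
        simp only [map_mul, map_pow, map_ofNat]
        ring

end CyclotomicRing

section CofactorCongruence

variable {K l : ℕ}

-- Differentiating `Φ * cofactor = X ^ 2 ^ K - 1` and reducing modulo `Φ` isolates the cofactor.
theorem mkZ_prod_erase_cyclotomic (hl : l < K) :
    mkZ l (∏ i ∈ (Finset.range (K + 1)).erase (l + 1), cyclotomic (2 ^ i) ℤ) = -2 ^ (K - l) := by
  set E := ∏ i ∈ (Finset.range (K + 1)).erase (l + 1), cyclotomic (2 ^ i) ℤ
  have hfactor : (1 + X ^ 2 ^ l) * E = X ^ 2 ^ K - 1 := by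
    rw [← cyclotomic_two_pow_succ, ← prod_cyclotomic_two_pow]
    exact Finset.mul_prod_erase _ (fun i => cyclotomic (2 ^ i) ℤ) (Finset.mem_range.2 (by omega))
  have euler (n : ℕ) : X * derivative (X ^ n : ℤ[X]) = (n : ℤ[X]) * X ^ n := by
    cases n with
    | zero => simp
    | succ n =>
      rw [derivative_X_pow_succ, C_add, C_1, map_natCast, Nat.cast_succ]
      ring
  have hderiv := congrArg (X * derivative ·) hfactor
  simp only [derivative_mul, derivative_add, derivative_sub, derivative_one, zero_add, sub_zero,
    mul_add, ← mul_assoc, euler] at hderiv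
  have hfactor' := congrArg (mkZ l) hfactor
  have hderiv' := congrArg (mkZ l) hderiv
  simp only [map_mul, map_add, map_sub, map_pow, map_one, map_ofNat, mkZ_X_pow_two_pow,
    Nat.cast_pow, Nat.cast_ofNat] at hfactor' hderiv'
  have hpow : (2 : QZ l) ^ K = 2 ^ l * 2 ^ (K - l) := by rw [← pow_add, Nat.add_sub_cancel' hl.le]
  apply mul_left_cancel₀ (pow_ne_zero l (QZ.two_ne_zero l))
  linear_combination -hderiv' + 2 ^ K * hfactor' - hpow

theorem two_pow_dvd_mkZ_iff_exists_dvd (hl : l < K) {F : ℤ[X]} :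
    2 ^ (K - l) ∣ mkZ l F ↔ ∃ G, cyclotomic (2 ^ (l + 1)) ℤ ∣
      F - (∏ i ∈ (Finset.range (K + 1)).erase (l + 1), cyclotomic (2 ^ i) ℤ) * G := by
  rw [← neg_dvd, ← mkZ_prod_erase_cyclotomic hl]
  simp only [cyclotomic_two_pow_succ, ← mkZ_eq_mkZ_iff, map_mul]
  exact ⟨fun ⟨g, hg⟩ => (mkZ_surjective l g).imp fun G hG => by rw [hg, hG],
    fun ⟨G, hG⟩ => ⟨_, hG⟩⟩

theorem two_pow_dvd_mkZ_of_forall_ne {l' : ℕ} (hl' : l' < K) {F : ℤ[X]} (hF : X - 1 ∣ F)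
    (h : ∀ l < K, l ≠ l' → 2 ^ (K - l) ∣ mkZ l F) : 2 ^ (K - l') ∣ mkZ l' F := by
  rw [two_pow_dvd_mkZ_iff_exists_dvd hl']
  refine exists_dvd_sub_prod_erase_mul (f := fun i => cyclotomic (2 ^ i) ℤ) ?_
    (Finset.mem_range.2 (by omega)) ?_
  · intro i _ j _ hij
    exact isRelPrime_cyclotomic (by positivity) (by positivity)
      ((Nat.pow_right_injective le_rfl).ne hij)
  · rintro (_ | l) hlK hne
    · exact ⟨0, by simpa using hF⟩
    · have hl : l < K := by simpa using hlK
      exact (two_pow_dvd_mkZ_iff_exists_dvd hl).1 (h l hl (by omega))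

end CofactorCongruence

section Valuation

variable {K l : ℕ}

theorem mkS_map_eq_mkS_map_iff {Z W : ℤ[X]} :
    mkS l (Z.map (Int.castRingHom ℚ)) = mkS l (W.map (Int.castRingHom ℚ)) ↔
      mkZ l Z = mkZ l W := by
  rw [mkZ_eq_mkZ_iff, mkS, Ideal.Quotient.eq, Ideal.mem_span_singleton,
    ← cyclotomic_two_pow_succ, ← cyclotomic_two_pow_succ, ← map_cyclotomic _ (Int.castRingHom ℚ),
    ← Polynomial.map_sub, map_dvd_map _ Int.cast_injective (cyclotomic.monic _ _)]

theorem mkS_eq_of_mkB_eq (hl : l < K) {p q : ℚ[X]} (h : mkB K p = mkB K q) :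
    mkS l p = mkS l q := by
  rw [mkB, Ideal.Quotient.eq, Ideal.mem_span_singleton] at h
  rw [mkS, Ideal.Quotient.eq, Ideal.mem_span_singleton, ← cyclotomic_two_pow_succ]
  refine (cyclotomic_dvd_geom_sum_of_dvd ℚ (pow_dvd_pow 2 hl) ?_).trans h
  exact (Nat.one_lt_two_pow l.succ_ne_zero).ne'

theorem mkZ_eq_of_mkS_eq_C_mul {m n : ℕ} {u : ℤ} (hu : u ≠ 0) {Z W : ℤ[X]}
    (h : mkS l (Z.map (Int.castRingHom ℚ)) =
      mkS l (C ((2 : ℚ) ^ (m - n : ℤ) / u) * W.map (Int.castRingHom ℚ))) :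
    mkZ l (2 ^ n * C u * Z) = mkZ l (2 ^ m * W) := by
  have hu' : (u : ℚ) ≠ 0 := Int.cast_ne_zero.2 hu
  have hcoeff : (2 : ℚ) ^ n * u * (2 ^ (m - n : ℤ) / u) = 2 ^ m := by
    rw [zpow_sub₀ two_ne_zero, zpow_natCast, zpow_natCast]
    field_simp
  have hscale := congrArg (mkS l (C ((2 : ℚ) ^ n * u)) * ·) h
  simp only [← map_mul, ← mul_assoc, hcoeff] at hscale
  rw [← mkS_map_eq_mkS_map_iff]
  simpa [mul_assoc, C_ofNat] using hscale

theorem IsNF.exists_oneSubOrder_eq (hl : l < K) {Z : ℤ[X]} {w : ℚ}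
    (h : IsNF K l (mkB K (Z.map (Int.castRingHom ℚ))) w) :
    ∃ c : ℕ, oneSubOrder l Z = c ∧ w = c / 2 ^ l := by
  obtain ⟨p, a, u, b, v₁, v₂, hp, hu, hb, hv₁, hS, rfl⟩ := h
  obtain ⟨m, n, rfl⟩ : ∃ m n : ℕ, a = m - n := ⟨a.toNat, (-a).toNat, by omega⟩
  rw [mkS_eq_of_mkB_eq hl hp] at hS
  have hZ : mkZ l (2 ^ n * C u * Z) = mkZ l (2 ^ m * ((1 - X) ^ b * v₁ + 2 * v₂)) :=
    mkZ_eq_of_mkS_eq_C_mul (by rintro rfl; simp at hu) (by simpa using hS)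
  have horder : (2 ^ l * n : ℕ) + oneSubOrder l Z = (2 ^ l * m + b : ℕ) := by
    have h : oneSubOrder l _ = oneSubOrder l _ := congrArg (emultiplicity (mkZ l (1 - X))) hZ
    rwa [oneSubOrder_mul, oneSubOrder_mul, oneSubOrder_mul, oneSubOrder_two_pow,
      oneSubOrder_two_pow, oneSubOrder_normalForm hb hv₁,
      oneSubOrder_eq_zero_iff.2 (by simpa using hu), add_zero, ← Nat.cast_add] at h
  obtain ⟨c, hc⟩ : ∃ c : ℕ, oneSubOrder l Z = c := by
    refine (ENat.ne_top_iff_exists.1 fun htop => ?_).imp fun _ => Eq.symm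
    rw [htop, add_top] at horder
    exact ENat.top_ne_natCast _ horder
  refine ⟨c, hc, ?_⟩
  rw [hc] at horder
  have hcast : (2 : ℚ) ^ l * n + c = 2 ^ l * m + b := by exact_mod_cast horder
  push_cast
  field_simp
  linear_combination -hcast

theorem isNF_of_oneSubOrder_eq (K : ℕ) {Z : ℤ[X]} {c : ℕ} (hc : oneSubOrder l Z = c) :
    IsNF K l (mkB K (Z.map (Int.castRingHom ℚ))) (c / 2 ^ l) := by
  obtain ⟨v, hv, hZ⟩ := exists_mkZ_eq_of_oneSubOrder_eq hc
  refine ⟨Z.map (Int.castRingHom ℚ), (c / 2 ^ l : ℕ), 1, c % 2 ^ l, v, 0, rfl, odd_one,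
    Nat.mod_lt _ (by positivity), hv, ?_, ?_⟩
  · rw [mkS_map_eq_mkS_map_iff.2 hZ, zpow_natCast]
    simp [C_ofNat]
  · have hcast : (2 : ℚ) ^ l * (c / 2 ^ l : ℕ) + (c % 2 ^ l : ℕ) = c := by
      exact_mod_cast Nat.div_add_mod c (2 ^ l)
    rw [Int.cast_natCast]
    field_simp
    linear_combination -hcast

theorem wl_mkB_map (hl : l < K) (Z : ℤ[X]) :
    wl K l (mkB K (Z.map (Int.castRingHom ℚ))) =
      ENat.map (fun c => (c : ℚ) / 2 ^ l) (oneSubOrder l Z) := by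
  unfold wl
  split_ifs with h
  · obtain ⟨c, hc, hw⟩ := h.choose_spec.exists_oneSubOrder_eq hl
    rw [hw, hc, ENat.map_natCast]
  · have htop : oneSubOrder l Z = ⊤ := by
      by_contra hne
      obtain ⟨c, hc⟩ := ENat.ne_top_iff_exists.1 hne
      exact h ⟨_, isNF_of_oneSubOrder_eq K hc.symm⟩
    rw [htop, ENat.map_top]

theorem wl_mkB_map_mul (hl : l < K) (Z W : ℤ[X]) :
    wl K l (mkB K ((Z * W).map (Int.castRingHom ℚ))) =
      wl K l (mkB K (Z.map (Int.castRingHom ℚ))) + wl K l (mkB K (W.map (Int.castRingHom ℚ))) := by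
  simp only [wl_mkB_map hl, oneSubOrder_mul]
  cases oneSubOrder l Z with
  | top => simp
  | coe c =>
    cases oneSubOrder l W with
    | top => simp
    | coe d =>
      rw [← Nat.cast_add, ENat.map_natCast, ENat.map_natCast, ENat.map_natCast, ← WithTop.coe_add,
        Nat.cast_add, add_div]

theorem le_wl_mkB_map_two_pow_mul_iff (hl : l < K) (n : ℕ) (Z : ℤ[X]) :
    (((n : ℚ) + K - l - (2 : ℚ) ^ (-(l : ℤ)) : ℚ) : WithTop ℚ) ≤
        wl K l (mkB K ((2 ^ n * Z).map (Int.castRingHom ℚ))) ↔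
      2 ^ (K - l) ∣ mkZ l ((1 - X) * Z) := by
  rw [wl_mkB_map hl, two_pow_dvd_mkZ_iff, ← pow_one (1 - X : ℤ[X]), oneSubOrder_mul,
    oneSubOrder_mul, oneSubOrder_two_pow, oneSubOrder_one_sub_X_pow]
  cases oneSubOrder l Z with
  | top => simp
  | coe c =>
    rw [← Nat.cast_add (2 ^ l * n) c, ← Nat.cast_add 1 c, ENat.map_natCast, WithTop.coe_le_coe,
      Nat.cast_le, ← Nat.cast_le (α := ℚ), zpow_neg, zpow_natCast, le_div_iff₀ (by positivity)]
    push_cast [Nat.cast_sub hl.le]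
    have hcancel : ((2 : ℚ) ^ l)⁻¹ * 2 ^ l = 1 := inv_mul_cancel₀ (by positivity)
    constructor <;> intro h
    · linear_combination h + hcancel
    · linear_combination h - hcancel

end Valuation

theorem stmt14_general {K l' : ℕ} (hl' : l' < K) (n : ℕ) (p : ℚ[X]) (h : ℤ[X])
    (hge : ∀ l < K, l ≠ l' →
      (((n : ℚ) + K - l - (2 : ℚ) ^ (-(l : ℤ)) : ℚ) : WithTop ℚ) ≤
        wl K l (mkB K p) + wl K l (mkB K (h.map (Int.castRingHom ℚ))))
    (hlt : wl K l' (mkB K p) + wl K l' (mkB K (h.map (Int.castRingHom ℚ))) <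
      (((n : ℚ) + K - l' - (2 : ℚ) ^ (-(l' : ℤ)) : ℚ) : WithTop ℚ)) :
    ¬ ∃ z : ℤ[X], mkB K p = mkB K (2 ^ n * z.map (Int.castRingHom ℚ)) := by
  rintro ⟨z, hpz⟩
  have hpz' : mkB K p = mkB K ((2 ^ n * z).map (Int.castRingHom ℚ)) := by simpa using hpz
  have bound_iff {l : ℕ} (hl : l < K) :
      (((n : ℚ) + K - l - (2 : ℚ) ^ (-(l : ℤ)) : ℚ) : WithTop ℚ) ≤
        wl K l (mkB K p) + wl K l (mkB K (h.map (Int.castRingHom ℚ))) ↔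
      2 ^ (K - l) ∣ mkZ l ((1 - X) * (z * h)) := by
    rw [hpz', ← wl_mkB_map_mul hl, mul_assoc, le_wl_mkB_map_two_pow_mul_iff hl]
  refine hlt.not_ge ((bound_iff hl').2 ?_)
  refine two_pow_dvd_mkZ_of_forall_ne hl' ⟨-(z * h), by ring⟩ fun l hl hne => ?_
  exact (bound_iff hl).1 (hge l hl hne)

/-- Necessary condition via an auxiliary element h ∈ ℤ[χ]/⟨...⟩: if
w_l(g)+w_l(h) ≥ 2+K-l-2^{-l} for all l ≠ l' but w_{l'}(g)+w_{l'}(h) < 2+K-l'-2^{-l'},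
then g ∉ 4·ℤ[χ]/⟨1+χ+⋯+χ^{2^K-1}⟩. -/
theorem stmt14 (K : ℕ) (hK : 1 ≤ K) (p : Polynomial ℚ)
    (h4 : ∀ l ≤ K - 1, ∃ z : Polynomial ℤ,
      mkS l p = mkS l (4 * z.map (Int.castRingHom ℚ)))
    (hz : Polynomial ℤ) (l' : ℕ) (hl' : l' ≤ K - 1)
    (hge : ∀ l ≤ K - 1, l ≠ l' →
      ((2 + (K : ℚ) - (l : ℚ) - (2 : ℚ) ^ (-(l : ℤ)) : ℚ) : WithTop ℚ) ≤
        wl K l (mkB K p) + wl K l (mkB K (hz.map (Int.castRingHom ℚ))))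
    (hlt : wl K l' (mkB K p) + wl K l' (mkB K (hz.map (Int.castRingHom ℚ))) <
      ((2 + (K : ℚ) - (l' : ℚ) - (2 : ℚ) ^ (-(l' : ℤ)) : ℚ) : WithTop ℚ)) :
    ¬ ∃ z : Polynomial ℤ, mkB K p = mkB K (4 * z.map (Int.castRingHom ℚ)) := by
  rintro ⟨z, hpz⟩
  exact stmt14_general (by omega) 2 p hz (fun l hl => hge l (by omega)) hlt
    ⟨z, by rw [hpz]; norm_num⟩
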